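/- Let c be a choice with competitive limited attention on a finite nonempty set X, and suppose there exist a menu A and x ∈ A such that x ≠ c(A) and c(A) ≠ c(A\{x}). Then c(A) f x for every list f that list rationalizes c; moreover, for every explanation by competitive limited attention (Γ,▷) of c: Γ(A\{x}) ≠ Γ(A), x ∈ Γ(A), and c(A) ▷ x. -/

import Mathlib

/-!
**Lists.** An alternative `x` that a rationalizing list `f` puts above `c A` can be removed from `A`
without changing the choice. Indeed, the `f`-maximum `l` of `A` is not chosen, so
`c A = c (A.erase l)`. If `l = x` this is the claim. Otherwise, by induction, removing `x` from
`A.erase l` changes nothing, and since `l` is also the maximum of `A.erase x`, adding it back to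
both menus pits it against the same survivor.

**Attention.** The choice from a menu depends only on the set of considered alternatives, and
removing an alternative that is not considered leaves this set unchanged.
-/

open Finset

variable {X : Type*} [DecidableEq X]

/-- `a` is the `r`-greatest element among those satisfying `P`. -/
def IsRMax (r : X → X → Prop) (P : X → Prop) (a : X) : Prop :=
  P a ∧ ∀ y, P y → y ≠ a → r a y

/-- `a` is the `r`-least element among those satisfying `P`. -/
def IsRMin (r : X → X → Prop) (P : X → Prop) (a : X) : Prop :=
  P a ∧ ∀ y, P y → y ≠ a → r y a

def Asym (r : X → X → Prop) : Prop := ∀ x y, r x y → ¬ r y x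

def StrictPartial (r : X → X → Prop) : Prop :=
  Asym r ∧ ∀ x y z, r x y → r y z → r x z

def StrictLinear (r : X → X → Prop) : Prop :=
  StrictPartial r ∧ ∀ x y : X, x ≠ y → r x y ∨ r y x

/-- No cycle `x₁ ≻ x₂ ≻ … ≻ xₙ ≻ x₁` with `n ≥ 3`. -/
def Acyclic (r : X → X → Prop) : Prop :=
  ¬ ∃ (n : ℕ) (f : ℕ → X), 3 ≤ n ∧ (∀ i, i + 1 < n → r (f i) (f (i + 1))) ∧
    r (f (n - 1)) (f 0)

def ChoiceFun (c : Finset X → X) : Prop :=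
  ∀ A : Finset X, A.Nonempty → c A ∈ A

def ChoiceCorr (Γ : Finset X → Finset X) : Prop :=
  ∀ A : Finset X, A.Nonempty → (Γ A).Nonempty ∧ Γ A ⊆ A

/-- `x ∈ max(A, r)`: `x` is in `A` and is undominated in `A` w.r.t. `r`. -/
def MaxOf (r : X → X → Prop) (A : Finset X) (x : X) : Prop :=
  x ∈ A ∧ ∀ y ∈ A, ¬ r y x

/-- The pair `(gt, rhd)` describes `c` as a shortlisting. -/
def Describes (gt rhd : X → X → Prop) (c : Finset X → X) : Prop :=
  StrictPartial gt ∧ StrictLinear rhd ∧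
    ∀ A : Finset X, A.Nonempty → IsRMax rhd (MaxOf gt A) (c A)

def Shortlisting (c : Finset X → X) : Prop :=
  ∃ gt rhd : X → X → Prop, Describes gt rhd c

/-- Optimal attention filter. -/
def OptimalFilter (Γ : Finset X → Finset X) : Prop :=
  ChoiceCorr Γ ∧
  (∀ B : Finset X, B.Nonempty → ∀ x ∈ B, x ∉ Γ B → Γ (B.erase x) ⊆ Γ B) ∧
  (∀ B : Finset X, B.Nonempty → ∀ x ∈ B, ∀ y : X,
    y ∈ Γ {x, y} → y ∈ Γ (B.erase x) → y ∈ Γ B) ∧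
  (∀ B : Finset X, B.Nonempty → ∀ x ∈ B, (B.erase x).Nonempty →
    (Γ B).erase x ⊆ Γ (B.erase x))

/-- `(Γ, rhd)` is an explanation by optimal limited attention of `c`. -/
def ExplByOLA (Γ : Finset X → Finset X) (rhd : X → X → Prop) (c : Finset X → X) : Prop :=
  OptimalFilter Γ ∧ StrictLinear rhd ∧
    ∀ A : Finset X, A.Nonempty → IsRMax rhd (· ∈ Γ A) (c A)

/-- Choice with optimal limited attention. -/
def COLA (c : Finset X → X) : Prop :=
  ∃ (Γ : Finset X → Finset X) (rhd : X → X → Prop), ExplByOLA Γ rhd c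

/-- Salient attention filter relative to `rhd`. -/
def SalientFilter (rhd : X → X → Prop) (Γ : Finset X → Finset X) : Prop :=
  ChoiceCorr Γ ∧
  ∀ B : Finset X, B.Nonempty → ∀ x ∈ B,
    ¬ IsRMin rhd (· ∈ B) x → ¬ IsRMax rhd (· ∈ Γ B) x →
      (Γ B).erase x = Γ (B.erase x)

/-- `(Γ, rhd)` is an explanation by salient limited attention of `c`. -/
def ExplBySLA (Γ : Finset X → Finset X) (rhd : X → X → Prop) (c : Finset X → X) : Prop :=
  StrictLinear rhd ∧ SalientFilter rhd Γ ∧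
    ∀ A : Finset X, A.Nonempty → IsRMax rhd (· ∈ Γ A) (c A)

/-- Choice with salient limited attention. -/
def CSLA (c : Finset X → X) : Prop :=
  ∃ (Γ : Finset X → Finset X) (rhd : X → X → Prop), ExplBySLA Γ rhd c

/-- Selective salient attention filter relative to `rhd`. -/
def SelectiveFilter (rhd : X → X → Prop) (Γ : Finset X → Finset X) : Prop :=
  ChoiceCorr Γ ∧
  ∀ B : Finset X, B.Nonempty → ∀ x ∈ B,
    ¬ IsRMax rhd (· ∈ Γ B) x → (Γ B).erase x = Γ (B.erase x)

/-- Choice with selective salient limited attention. -/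
def CSSLA (c : Finset X → X) : Prop :=
  ∃ (Γ : Finset X → Finset X) (rhd : X → X → Prop),
    StrictLinear rhd ∧ SelectiveFilter rhd Γ ∧
      ∀ A : Finset X, A.Nonempty → IsRMax rhd (· ∈ Γ A) (c A)

def Rationalizable (c : Finset X → X) : Prop :=
  ∃ rhd : X → X → Prop, StrictLinear rhd ∧
    ∀ A : Finset X, A.Nonempty → IsRMax rhd (· ∈ A) (c A)

/-- Competitive attention filter relative to `rhd`. -/
def CompetitiveFilter (rhd : X → X → Prop) (Γ : Finset X → Finset X) : Prop :=
  ChoiceCorr Γ ∧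
  (∀ A : Finset X, A.Nonempty → ∀ x ∈ A, x ∉ Γ A → Γ A = Γ (A.erase x)) ∧
  (∀ A : Finset X, 1 < A.card → ∀ x y : X,
    IsRMax rhd (· ∈ A) y → IsRMax rhd (· ∈ Γ (A.erase y)) x →
      (y ∈ Γ {x, y} ↔ y ∈ Γ A))

/-- `(Γ, rhd)` is an explanation by competitive limited attention of `c`. -/
def ExplByCCLA (Γ : Finset X → Finset X) (rhd : X → X → Prop) (c : Finset X → X) : Prop :=
  StrictLinear rhd ∧ CompetitiveFilter rhd Γ ∧
    ∀ A : Finset X, A.Nonempty → IsRMax rhd (· ∈ Γ A) (c A)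

/-- Choice with competitive limited attention. -/
def CCLA (c : Finset X → X) : Prop :=
  ∃ (Γ : Finset X → Finset X) (rhd : X → X → Prop), ExplByCCLA Γ rhd c

/-- The list `f` list rationalizes `c`. -/
def ListRationalizes (f : X → X → Prop) (c : Finset X → X) : Prop :=
  StrictLinear f ∧
    ∀ A : Finset X, 1 < A.card → ∀ l : X, IsRMax f (· ∈ A) l →
      c A = c {c (A.erase l), l}

def ListRational (c : Finset X → X) : Prop :=
  ∃ f : X → X → Prop, ListRationalizes f c

/-- `(u, v, W)` is a general-temptation representation of `c`. -/
def GTRrep (c : Finset X → X) (u v : X → ℝ) (W : ℝ → ℝ → ℝ) : Prop :=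
  (∀ r s : ℝ, 0 ≤ W r s) ∧
  (∀ r₁ r₂ s : ℝ, r₁ < r₂ → W r₁ s < W r₂ s) ∧
  (∀ r s₁ s₂ : ℝ, s₁ < s₂ → W r s₁ < W r s₂) ∧
  ∀ (A : Finset X) (hA : A.Nonempty),
    c A ∈ A ∧ ∀ x ∈ A, x ≠ c A →
      W (u x) (v x - A.sup' hA v) < W (u (c A)) (v (c A) - A.sup' hA v)

def HasGTR (c : Finset X → X) : Prop :=
  ∃ (u v : X → ℝ) (W : ℝ → ℝ → ℝ), GTRrep c u v W

/-- `(gg, U)` is a conspicuity based endogenous reference representation of `c`. -/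
def CERrep (c : Finset X → X) (gg : X → X → Prop) (U : X → X → ℝ) : Prop :=
  StrictLinear gg ∧ (∀ z : X, Function.Injective (U z)) ∧
  ∀ A : Finset X, A.Nonempty → ∀ m : X, IsRMax gg (· ∈ A) m →
    c A ∈ A ∧ ∀ x ∈ A, x ≠ c A → U m x < U m (c A)

def HasCER (c : Finset X → X) : Prop :=
  ∃ (gg : X → X → Prop) (U : X → X → ℝ), CERrep c gg U

/-- `(A, B)` is a switch of `c`. -/
def Switch (c : Finset X → X) (A B : Finset X) : Prop :=
  A.Nonempty ∧ A ⊆ B ∧ c B ∈ A ∧ c A ≠ c B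

/-- Revealed salience: `x ⊨_c y`. -/
def RevSal (c : Finset X → X) (x y : X) : Prop :=
  ∃ A : Finset X, x ∈ A ∧ y ∈ A ∧ x ≠ c A ∧ c (A.erase x) ≠ c A

/-- Axiom of Revealed Temptation. -/
def ART (c : Finset X → X) : Prop :=
  ∀ B : Finset X, B.Nonempty → ∃ x ∈ B,
    ∀ B' B'' : Finset X, x ∈ B' → B' ⊂ B'' → B'' ⊆ B → ¬ Switch c B' B''

/-- The revealed relation `R^c`. -/
def Rrel (c : Finset X → X) (x y : X) : Prop :=
  (∃ A : Finset X, A.Nonempty ∧ x = c (insert y A) ∧ x ≠ c A) ∨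
  (∃ A : Finset X, A.Nonempty ∧ y = c (insert x A) ∧ x = c {x, y}) ∨
  (∃ A : Finset X, A.Nonempty ∧ y ≠ c (insert x A) ∧ y = c {x, y} ∧ y = c A)

/-- The revealed-to-follow relation `F_c`. -/
def Frel (c : Finset X → X) (x y : X) : Prop :=
  (∃ A : Finset X, A.Nonempty ∧ x = c (insert y A) ∧ y = c {x, y}) ∨
  (∃ A : Finset X, A.Nonempty ∧ x = c (insert y A) ∧ x ≠ c A) ∨
  (∃ A : Finset X, A.Nonempty ∧ x ≠ c (insert y A) ∧ x = c {x, y} ∧ x = c A)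

theorem Asym.ne {α : Type*} {r : α → α → Prop} (hr : Asym r) {a b : α} (hab : r a b) : a ≠ b := by
  rintro rfl
  exact hr a a hab hab

theorem IsRMax.unique {α : Type*} {r : α → α → Prop} (hr : Asym r) {P : α → Prop} {a b : α}
    (ha : IsRMax r P a) (hb : IsRMax r P b) : a = b := by
  by_contra hab
  exact hr a b (ha.2 b hb.1 (Ne.symm hab)) (hb.2 a ha.1 hab)

theorem IsRMax.mono {α : Type*} {r : α → α → Prop} {P Q : α → Prop} {a : α}
    (ha : IsRMax r P a) (hQP : ∀ y, Q y → P y) (hQa : Q a) : IsRMax r Q a :=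
  ⟨hQa, fun y hy => ha.2 y (hQP y hy)⟩

theorem StrictLinear.isStrictTotalOrder {α : Type*} {r : α → α → Prop} (hr : StrictLinear r) :
    IsStrictTotalOrder α r where
  trichotomous a b hab hba := by
    by_contra hne
    exact (hr.2 a b hne).elim hab hba
  irrefl _ ha := hr.1.1.ne ha rfl
  trans := hr.1.2

theorem StrictLinear.exists_isRMax {α : Type*} {r : α → α → Prop} (hr : StrictLinear r)
    {A : Finset α} (hA : A.Nonempty) : ∃ l, IsRMax r (· ∈ A) l := by
  classical
  have := hr.isStrictTotalOrder
  -- In this order `a < b` means `r a b`, so the `r`-greatest element is the minimum.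
  let _ : LinearOrder α := linearOrderOfSTO r
  exact ⟨A.min' hA, A.min'_mem hA, fun y hy hne => (A.min'_le y hy).lt_of_ne hne.symm⟩

namespace ListRationalizes

variable {c : Finset X → X} {f : X → X → Prop} {A : Finset X} {x l : X}

theorem choice_erase_max_eq (hf : ListRationalizes f c) (hc : ChoiceFun c)
    (hl : IsRMax f (· ∈ A) l) (hne : c A ≠ l) : c (A.erase l) = c A := by
  have hcard : 1 < A.card := one_lt_card.2 ⟨c A, hc A ⟨l, hl.1⟩, l, hl.1, hne⟩
  have hmem : c A ∈ ({c (A.erase l), l} : Finset X) := by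
    rw [hf.2 A hcard l hl]
    exact hc _ (insert_nonempty _ _)
  rw [mem_insert, mem_singleton] at hmem
  exact (hmem.resolve_right hne).symm

theorem choice_erase_eq_of_rel (hf : ListRationalizes f c) (hc : ChoiceFun c)
    (hx : f x (c A)) : c (A.erase x) = c A := by
  induction A using Finset.strongInduction with
  | H A ih =>
    by_cases hxA : x ∈ A
    swap
    · rw [erase_eq_of_notMem hxA]
    have hcA : c A ∈ A := hc A ⟨x, hxA⟩
    have hne : c A ≠ x := (hf.1.1.1.ne hx).symm
    obtain ⟨l, hl⟩ := hf.1.exists_isRMax ⟨x, hxA⟩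
    have hcl : c A ≠ l := by
      rintro rfl
      exact hf.1.1.1 _ _ hx (hl.2 x hxA hne.symm)
    have hl_erase : c (A.erase l) = c A := hf.choice_erase_max_eq hc hl hcl
    obtain rfl | hlx := eq_or_ne l x
    · exact hl_erase
    have hlAx : l ∈ A.erase x := mem_erase.2 ⟨hlx, hl.1⟩
    have hcAx : c A ∈ A.erase x := mem_erase.2 ⟨hne, hcA⟩
    have hsurvivor : c ((A.erase x).erase l) = c (A.erase l) := by
      rw [erase_right_comm]
      exact ih _ (erase_ssubset hl.1) (hl_erase.symm ▸ hx)
    calc c (A.erase x)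
        = c {c ((A.erase x).erase l), l} :=
          hf.2 _ (one_lt_card.2 ⟨_, hcAx, _, hlAx, hcl⟩) l
            (hl.mono (fun _ => mem_of_mem_erase) hlAx)
      _ = c {c (A.erase l), l} := by rw [hsurvivor]
      _ = c A := (hf.2 A (one_lt_card.2 ⟨_, hcA, _, hl.1, hcl⟩) l hl).symm

theorem rel_of_choice_ne_choice_erase (hf : ListRationalizes f c) (hc : ChoiceFun c)
    (hne : x ≠ c A) (hchange : c A ≠ c (A.erase x)) : f (c A) x :=
  (hf.1.2 x (c A) hne).resolve_left fun h => hchange (hf.choice_erase_eq_of_rel hc h).symm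

end ListRationalizes

/-- An attention filter: ignored alternatives can be removed without affecting what is considered.
This is condition (a) in the definition of a competitive attention filter. -/
def AttentionFilter (Γ : Finset X → Finset X) : Prop :=
  ∀ A : Finset X, A.Nonempty → ∀ x ∈ A, x ∉ Γ A → Γ A = Γ (A.erase x)

/-- `c` selects the `rhd`-best of the alternatives that `Γ` considers, the requirement shared by all
explanations by limited attention. As `c ∅` is a junk value, only nonempty menus count. -/
def ChoosesMaxOf (rhd : X → X → Prop) (Γ : Finset X → Finset X) (c : Finset X → X) : Prop :=
  ∀ A : Finset X, A.Nonempty → IsRMax rhd (· ∈ Γ A) (c A)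

theorem ChoosesMaxOf.choice_congr {α : Type*} {rhd : α → α → Prop} {Γ : Finset α → Finset α}
    {c : Finset α → α} {A B : Finset α} (hmax : ChoosesMaxOf rhd Γ c) (hrhd : Asym rhd)
    (hA : A.Nonempty) (hB : B.Nonempty) (hΓ : Γ A = Γ B) : c A = c B :=
  (hmax A hA).unique hrhd (hΓ ▸ hmax B hB)

theorem AttentionFilter.mem_of_apply_erase_ne {Γ : Finset X → Finset X} (hΓ : AttentionFilter Γ)
    {A : Finset X} {x : X} (hne : Γ (A.erase x) ≠ Γ A) : x ∈ Γ A := by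
  have hxA : x ∈ A := by
    by_contra hxA
    exact hne (by rw [erase_eq_of_notMem hxA])
  by_contra hx
  exact hne (hΓ A ⟨x, hxA⟩ x hxA hx).symm

theorem stmt_12_general {c : Finset X → X} (hc : ChoiceFun c) {A : Finset X} {x : X}
    (hne : x ≠ c A) (hchange : c A ≠ c (A.erase x)) :
    (∀ f : X → X → Prop, ListRationalizes f c → f (c A) x) ∧
    (∀ (Γ : Finset X → Finset X) (rhd : X → X → Prop),
      Asym rhd → AttentionFilter Γ → ChoosesMaxOf rhd Γ c →
        Γ (A.erase x) ≠ Γ A ∧ x ∈ Γ A ∧ rhd (c A) x) := by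
  refine ⟨fun f hf => hf.rel_of_choice_ne_choice_erase hc hne hchange, ?_⟩
  intro Γ rhd hrhd hfilter hmax
  have hA : A.Nonempty := by
    by_contra hA
    exact hchange (by rw [not_nonempty_iff_eq_empty.1 hA, erase_empty])
  have hAx : (A.erase x).Nonempty := ⟨c A, mem_erase.2 ⟨hne.symm, hc A hA⟩⟩
  have hΓ : Γ (A.erase x) ≠ Γ A := fun h => hchange (hmax.choice_congr hrhd hA hAx h.symm)
  have hx : x ∈ Γ A := hfilter.mem_of_apply_erase_ne hΓ
  exact ⟨hΓ, hx, (hmax A hA).2 x hx hne⟩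

theorem stmt_12 [Fintype X] [Nonempty X] (c : Finset X → X) (hc : ChoiceFun c)
    (hCCLA : CCLA c) (A : Finset X) (hA : A.Nonempty) (x : X) (hx : x ∈ A)
    (h1 : x ≠ c A) (h2 : c A ≠ c (A.erase x)) :
    (∀ f : X → X → Prop, ListRationalizes f c → f (c A) x) ∧
    (∀ (Γ : Finset X → Finset X) (rhd : X → X → Prop), ExplByCCLA Γ rhd c →
      Γ (A.erase x) ≠ Γ A ∧ x ∈ Γ A ∧ rhd (c A) x) := by
  obtain ⟨hlist, hattention⟩ := stmt_12_general hc h1 h2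
  exact ⟨hlist, fun Γ rhd ⟨hlin, ⟨_, hfilter, _⟩, hmax⟩ =>
    hattention Γ rhd hlin.1.1 hfilter hmax⟩
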